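/- Let p be a prime and let (A, m) be a regular local ring equipped with a finite ring endomorphism φ : A → A that is a lift of Frobenius, with p ∈ m \ m²; set Ā := A/pA. Let f_1, …, f_r be a regular sequence in A, set I := (f_1, …, f_r)Ā and R := A/(f_1, …, f_r), and assume p is a nonzerodivisor on R. Then for every integer n ≥ 1: R is n-quasi-F-split if and only if there exists an Ā-module homomorphism ψ : Q_{A,n} → Ā such that ψ(1) is a unit of Ā and ψ(Ker(Q_{A,n} → Q_{R,n})) ⊆ I, where Q_{A,n} → Q_{R,n} is the map induced by the surjection A → R. -/

import Mathlib

/-!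
Write `Ā = A/p` and `Q_n = W_n(A)/p`, an `Ā`-module through `Φ_n : a ↦ [a ^ p]`. Everything rests on
the fact that `Q_n` is a projective `Ā`-module (`projective_wittModP`).

Granting this, a splitting `σ : Q_{R,n} → R̄` composed with `Q_n → Q_{R,n}` lifts along the
surjection `Ā → R̄ = Ā/I` to `ψ : Q_n → Ā`. Then `ψ` maps the kernel of `Q_n → Q_{R,n}` into `I`, and
`ψ 1` is a unit because it is `1` modulo the proper ideal `I` of the local ring `Ā`. Conversely, a
map `ψ` that sends this kernel into `I` descends to `Q_{R,n} → R̄`, and dividing by `ψ 1` gives a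
splitting; this direction uses only the surjectivity of `W_n(A) → W_n(R)`.

Projectivity is proved by induction on `n`. As `A` is `p`-torsion free, `x ↦ Vⁿ[x]` induces an
additive bijection from `Ā` onto the kernel of the restriction `Q_{n+1} → Q_n`, under which `a : Ā`
acts on the kernel as multiplication by `a ^ p ^ (n + 1)` on `Ā` (`topVerschiebungEquiv`). The kernel
is thus `F^{n+1}_* Ā`, so it is finite, because `Ā` is `F`-finite (`φ` is a finite lift of
Frobenius), and it remains to see that it is free. Since `p ∈ m \ m²`, the element `p` can be
completed to a regular sequence generating `m` (`exists_cons_isWeaklyRegular`), so the maximal ideal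
of `Ā` is generated by a regular sequence. Its powers form a regular sequence on `Ā`
(`isWeaklyRegular_map_pow`), i.e. the sequence itself is regular on `F^{n+1}_* Ā`, and a finite module
on which generators of the maximal ideal form a regular sequence is free
(`free_of_isWeaklyRegular_generators`).
-/

/-- `S` is `n`-quasi-`F`-split: the ring homomorphism
`Φ_{S,n} : S̄ → Q_{S,n} = W_n(S)/pW_n(S)`, `a mod p ↦ [a^p] mod p`, admits an
`S̄`-linear left inverse (where `Q_{S,n}` is an `S̄`-module via `Φ_{S,n}`).
Equivalently (composing with the surjection `W_n(S) → W_n(S)/pW_n(S)`; additive maps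
to the characteristic-`p` ring `S̄` automatically kill `pW_n(S)`): there is an additive
map `σ : W_n(S) → S̄` which is `S̄`-semilinear for the `Φ`-action and satisfies
`σ([a^p]) = a mod p` for all `a : S`. -/
def IsNQuasiFSplit (p : ℕ) [Fact p.Prime] (S : Type*) [CommRing S] (n : ℕ) : Prop :=
  ∃ σ : TruncatedWittVector p n S → S ⧸ Ideal.span {(p : S)},
    (∀ x y : TruncatedWittVector p n S, σ (x + y) = σ x + σ y) ∧
    (∀ (a : S) (x : TruncatedWittVector p n S),
      σ (WittVector.truncate n (WittVector.teichmuller p (a ^ p)) * x)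
        = Ideal.Quotient.mk _ a * σ x) ∧
    (∀ a : S,
      σ (WittVector.truncate n (WittVector.teichmuller p (a ^ p)))
        = Ideal.Quotient.mk _ a)


/-! ### Regular sequences and free modules -/

universe u v w

section CommutativeAlgebra

open RingTheory.Sequence IsLocalRing

/-- A finite module over a Noetherian local ring is free if some generators of the maximal ideal form
a weakly regular sequence on it. The induction divides both the ring and the module by the first
element of the sequence, hence the quantification over all rings; over a field there is nothing to
prove. -/
theorem free_of_isWeaklyRegular_generators (k : ℕ) :
    ∀ (B : Type u) [CommRing B] [IsLocalRing B] [IsNoetherianRing B] (M : Type v)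
      [AddCommGroup M] [Module B M] [Module.Finite B M] (l : List B),
      l.length = k → Ideal.ofList l = maximalIdeal B → IsWeaklyRegular M l →
      Module.Free B M := by
  induction k with
  | zero =>
    intro B _ _ _ M _ _ _ l hl hm _
    obtain rfl := List.length_eq_zero_iff.mp hl
    have hB : IsField B := isField_iff_maximalIdeal_eq.mpr (by simpa using hm.symm)
    let := hB.toField
    exact Module.Free.of_divisionRing B M
  | succ k ih =>
    intro B _ _ _ M _ _ _ l hl hm hreg
    obtain ⟨x, l, rfl⟩ := List.exists_cons_of_length_eq_add_one hl
    have hx : x ∈ maximalIdeal B := hm ▸ Ideal.subset_span (by simp)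
    have hle : Ideal.span {x} ≤ maximalIdeal B := by simpa using hx
    have : Nontrivial (B ⧸ Ideal.span {x}) :=
      Ideal.Quotient.nontrivial_iff.mpr (ne_top_of_le_ne_top (maximalIdeal.isMaximal B).ne_top hle)
    have : IsLocalRing (B ⧸ Ideal.span {x}) :=
      .of_surjective' (Ideal.Quotient.mk _) Ideal.Quotient.mk_surjective
    have : Module.Finite (B ⧸ Ideal.span {x}) (QuotSMulTop x M) :=
      .of_restrictScalars_finite B _ _
    have : Module.FinitePresentation B M := Module.finitePresentation_of_finite B M
    obtain ⟨hreg₁, hreg₂⟩ := (isWeaklyRegular_cons_iff' M x l).mp hreg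
    rw [← Module.free_quotSMulTop_iff_free B M
      (x := x) (maximalIdeal_le_jacobson _ hx) hreg₁]
    refine ih (B ⧸ Ideal.span {x}) (QuotSMulTop x M) (l.map (Ideal.Quotient.mk _))
      (by simpa using hl) ?_ hreg₂
    have : (maximalIdeal B).map (Ideal.Quotient.mk (Ideal.span {x})) =
        maximalIdeal (B ⧸ Ideal.span {x}) :=
      map_maximalIdeal_of_surjective _ Ideal.Quotient.mk_surjective
    rw [← this, ← hm, Ideal.ofList_cons, Ideal.map_sup, Ideal.map_quotient_self, bot_sup_eq,
      Ideal.map_ofList]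

/-- The exponent is `k + 1` so that the powers stay in the maximal ideal. Regular sequences in the
maximal ideal may be permuted, so each element can be moved to the end, where replacing it by a power
preserves regularity. -/
theorem isWeaklyRegular_map_pow {B : Type u} [CommRing B] [IsLocalRing B]
    (k : ℕ) (l : List B) (hl : ∀ x ∈ l, x ∈ maximalIdeal B) :
    ∀ (M : Type v) [AddCommGroup M] [Module B M] [IsNoetherian B M], IsWeaklyRegular M l →
      IsWeaklyRegular M (l.map (· ^ (k+1))) := by
  induction l with
  | nil => intro M _ _ _ _; simp
  | cons x l ih =>
    intro M _ _ _ h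
    have h₁ : IsWeaklyRegular M (l ++ [x]) :=
      isWeaklyRegular_of_perm_of_subset_maximalIdeal h
        (by simpa using (List.perm_append_singleton x l).symm) hl
    have h₂ : IsWeaklyRegular M (l ++ [x ^ (k+1)]) := by
      rw [isWeaklyRegular_append_iff, isWeaklyRegular_singleton_iff] at h₁ ⊢
      exact ⟨h₁.1, h₁.2.pow (k+1)⟩
    have h₃ : IsWeaklyRegular M (x ^ (k+1) :: l) := by
      refine isWeaklyRegular_of_perm_of_subset_maximalIdeal h₂ (List.perm_append_singleton _ l) ?_
      intro y hy
      rcases List.mem_append.mp hy with hy | hy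
      · exact hl y (by simp [hy])
      · obtain rfl := List.mem_singleton.mp hy
        exact Ideal.pow_mem_of_mem _ (hl x (by simp)) _ k.succ_pos
    rw [isWeaklyRegular_cons_iff] at h₃
    rw [List.map_cons, isWeaklyRegular_cons_iff]
    exact ⟨h₃.1, ih (fun y hy => hl y (by simp [hy])) _ h₃.2⟩

/-- Exchange lemma: if `q ∈ m \ m²` and `m` is generated by a weakly regular sequence, then `q` has a
unit coefficient at some member `x` of the sequence, and `x` may be replaced by `q`. -/
theorem exists_cons_isWeaklyRegular {A : Type u} [CommRing A] [IsLocalRing A] [IsNoetherianRing A]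
    {rs : List A} (hrs : IsWeaklyRegular A rs) (hm : Ideal.ofList rs = maximalIdeal A)
    {q : A} (hq : q ∈ maximalIdeal A) (hq2 : q ∉ maximalIdeal A ^ 2) :
    ∃ l : List A, IsWeaklyRegular A (q :: l) ∧ Ideal.ofList (q :: l) = maximalIdeal A := by
  have hmem : ∀ x ∈ rs, x ∈ maximalIdeal A := fun x hx => hm ▸ Ideal.subset_span hx
  have key : ∀ (l : List A), (∀ x ∈ l, x ∈ maximalIdeal A) → ∀ y ∈ Ideal.ofList l,
      y ∉ maximalIdeal A ^ 2 → ∃ (x : A) (l' : List A) (u z : A), (l'  ++ [x]).Perm l ∧ IsUnit u ∧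
        z ∈ Ideal.ofList l' ∧ y = u * x + z := by
    intro l
    induction l with
    | nil =>
      intro _ y hy hy2
      simp at hy
      simp [hy] at hy2
    | cons x l ih =>
      intro hl y hy hy2
      rw [Ideal.ofList_cons, Submodule.mem_sup] at hy
      obtain ⟨a, ha, b, hb, rfl⟩ := hy
      obtain ⟨c, rfl⟩ := Ideal.mem_span_singleton'.mp ha
      by_cases hc : IsUnit c
      · exact ⟨x, l, c, b, List.perm_append_singleton x l, hc, hb, rfl⟩
      · have hcx : c * x ∈ maximalIdeal A ^ 2 := by
          rw [pow_two]
          exact Ideal.mul_mem_mul hc (hl x (by simp))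
        obtain ⟨x', l', u, z, hp, hu, hz, rfl⟩ := ih (fun y hy => hl y (by simp [hy])) b hb
          (fun hb2 => hy2 (add_mem hcx hb2))
        refine ⟨x', x :: l', u, c * x + z, by simpa using hp.cons x, hu, ?_, by ring⟩
        rw [Ideal.ofList_cons]
        exact Submodule.add_mem_sup (Ideal.mem_span_singleton'.mpr ⟨c, rfl⟩) hz
  obtain ⟨x, l, u, z, hperm, hu, hz, rfl⟩ := key rs hmem q (hm ▸ hq) hq2
  have hmem' : ∀ y ∈ l, y ∈ maximalIdeal A := fun y hy => hmem y (hperm.subset (by simp [hy]))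
  refine ⟨l, ?_, ?_⟩
  · have h₁ := isWeaklyRegular_of_perm_of_subset_maximalIdeal hrs hperm.symm hmem
    have h₂ : IsWeaklyRegular A (l ++ [u * x + z]) := by
      rw [isWeaklyRegular_append_iff, isWeaklyRegular_singleton_iff] at h₁ ⊢
      refine ⟨h₁.1, ?_⟩
      have h₃ := (hu.isSMulRegular (M := A ⧸ (Ideal.ofList l • ⊤ : Submodule A A))).mul h₁.2
      intro a b hab
      refine h₃ ?_
      have hz0 : ∀ a : A ⧸ (Ideal.ofList l • ⊤ : Submodule A A), z • a = 0 := by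
        intro a
        obtain ⟨a, rfl⟩ := Submodule.Quotient.mk_surjective _ a
        rw [← Submodule.Quotient.mk_smul, Submodule.Quotient.mk_eq_zero]
        exact Submodule.smul_mem_smul hz trivial
      simpa [add_smul, hz0] using hab
    refine isWeaklyRegular_of_perm_of_subset_maximalIdeal h₂ (List.perm_append_singleton _ l) ?_
    intro y hy
    rcases List.mem_append.mp hy with hy | hy
    · exact hmem' y hy
    · obtain rfl := List.mem_singleton.mp hy
      exact hq
  · have e : Ideal.ofList rs = Ideal.ofList (l ++ [x]) := by
      simp only [Ideal.ofList]
      congr 1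
      ext y
      exact hperm.symm.mem_iff
    refine le_antisymm (Ideal.span_le.mpr ?_) ?_
    · intro y hy
      rcases List.mem_cons.mp hy with rfl | hy
      · exact hq
      · exact hmem' y hy
    · rw [← hm, e, Ideal.ofList_append, Ideal.ofList_singleton, sup_le_iff,
        Ideal.span_singleton_le_iff_mem, Ideal.ofList_cons]
      refine ⟨le_sup_right, ?_⟩
      rw [← Ideal.unit_mul_mem_iff_mem _ hu]
      have hux : (u * x + z) + -z ∈ Ideal.span {u * x + z} ⊔ Ideal.ofList l :=
        Submodule.add_mem_sup (Ideal.mem_span_singleton_self _) (neg_mem hz)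
      rwa [add_neg_cancel_right] at hux

end CommutativeAlgebra

/-! ### The module `W_n(A)/p` and its restriction maps -/

section Witt

open WittVector

variable {p : ℕ} [Fact p.Prime] {A : Type u} [CommRing A]

/-- In `W_{n+1}(A)`, the element `Vⁿ u` depends only on the zeroth component of `u`. -/
theorem truncate_iterate_verschiebung_congr {n : ℕ} {u v : WittVector p A}
    (h : u.coeff 0 = v.coeff 0) :
    WittVector.truncate (n + 1) (verschiebung^[n] u) =
      WittVector.truncate (n + 1) (verschiebung^[n] v) := by
  ext i
  rw [coeff_truncate, coeff_truncate]
  rcases Nat.lt_succ_iff_lt_or_eq.mp i.2 with hi | hi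
  · rw [iterate_verschiebung_coeff_eq_zero _ hi, iterate_verschiebung_coeff_eq_zero _ hi]
  · have hu := iterate_verschiebung_coeff u n 0
    have hv := iterate_verschiebung_coeff v n 0
    rw [zero_add] at hu hv
    rw [hi, hu, hv, h]

theorem coeff_natCast_mul_of_coeff_eq_zero {n : ℕ} {w : WittVector p A}
    (h : ∀ i < n, w.coeff i = 0) :
    (((p : ℕ) : WittVector p A) * w).coeff n = (p : A) * w.coeff n := by
  have hF : frobenius^[n] (p : WittVector p A) = p := by
    induction n with
    | zero => rfl
    | succ n ih =>
      rw [Function.iterate_succ_apply', ih (fun i hi => h i (by omega)), map_natCast]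
  have hw := eq_iterate_verschiebung h
  have h0 : ∀ x : WittVector p A, (verschiebung^[n] x).coeff n = x.coeff 0 := fun x => by
    simpa using iterate_verschiebung_coeff x n 0
  have hpc : (p : WittVector p A).coeff 0 = (p : A) := map_natCast (constantCoeff (p := p)) p
  rw [hw, mul_comm, iterate_verschiebung_mul_left, hF, h0, h0, mul_coeff_zero, hpc, mul_comm]

/-- If `A` is `p`-torsion free, then so is `W_n(A)`. -/
theorem coeff_eq_zero_of_natCast_mul (hp : ∀ a : A, (p : A) * a = 0 → a = 0) {n : ℕ}
    {w : WittVector p A} (h : ∀ i < n, ((p : WittVector p A) * w).coeff i = 0) :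
    ∀ i < n, w.coeff i = 0 := by
  intro i
  induction i using Nat.strong_induction_on with
  | _ i ih =>
    intro hi
    refine hp _ ?_
    rw [← coeff_natCast_mul_of_coeff_eq_zero fun j hj => ih j hj (hj.trans hi)]
    exact h i hi

theorem coeff_zero_iterate_frobenius_teichmuller (n : ℕ) (b : A) :
    (frobenius^[n] (teichmuller p b)).coeff 0 = b ^ p ^ n := by
  have key : ∀ (n k : ℕ) (x : WittVector p A),
      ghostComponent k (frobenius^[n] x) = ghostComponent (k + n) x := by
    intro n
    induction n with
    | zero => intro k x; rfl
    | succ n ih =>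
      intro k x
      rw [Function.iterate_succ_apply, ih, ghostComponent_frobenius, add_assoc]
  have := key n 0 (teichmuller p b)
  rwa [zero_add, ghostComponent_teichmuller, ghostComponent_apply, wittPolynomial_zero,
    MvPolynomial.aeval_X] at this

variable (p A) in
/-- `Q_{A,n} = W_n(A) / p W_n(A)`, a type of its own so that it can carry the `Ā`-algebra structure
given by `Φ_{A,n}`. -/
def WittModP (n : ℕ) : Type u :=
  TruncatedWittVector p n A ⧸ Ideal.span {(p : TruncatedWittVector p n A)}

noncomputable instance (n : ℕ) : CommRing (WittModP p A n) :=
  inferInstanceAs (CommRing (TruncatedWittVector p n A ⧸ Ideal.span _))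

variable (p A) in
/-- The quotient map `W_n(A) → Q_{A,n}`. -/
noncomputable def WittModP.mk (n : ℕ) : TruncatedWittVector p n A →+* WittModP p A n :=
  Ideal.Quotient.mk _

theorem WittModP.mk_surjective (n : ℕ) : Function.Surjective (WittModP.mk p A n) :=
  Ideal.Quotient.mk_surjective

theorem WittModP.mk_eq_zero_iff {n : ℕ} {x : TruncatedWittVector p n A} :
    WittModP.mk p A n x = 0 ↔ (p : TruncatedWittVector p n A) ∣ x := by
  rw [← Ideal.mem_span_singleton]
  exact Ideal.Quotient.eq_zero_iff_mem

theorem WittModP.natCast_eq_zero (n : ℕ) : (p : WittModP p A n) = 0 := by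
  rw [← map_natCast (WittModP.mk p A n), WittModP.mk_eq_zero_iff]

/-- Already `(V z) ^ 2 = p V(z ^ 2)`. -/
theorem natCast_dvd_verschiebung_pow (z : WittVector p A) :
    (p : WittVector p A) ∣ verschiebung z ^ p := by
  have h2 : (p : WittVector p A) ∣ verschiebung z ^ 2 := by
    rw [pow_two, ← verschiebung_mul_frobenius, frobenius_verschiebung, ← mul_assoc, mul_comm,
      ← nsmul_eq_mul, map_nsmul, nsmul_eq_mul]
    exact dvd_mul_right _ _
  exact h2.trans (pow_dvd_pow _ (Fact.out : p.Prime).two_le)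

theorem exists_teichmuller_add (a b : A) :
    ∃ z : WittVector p A, teichmuller p (a + b) = teichmuller p a + teichmuller p b +
      verschiebung z := by
  have h : ∀ i < 1, (teichmuller p (a + b) - (teichmuller p a + teichmuller p b)).coeff i = 0 := by
    intro i hi
    obtain rfl : i = 0 := by omega
    have h0 := map_sub (constantCoeff (p := p)) (teichmuller p (a + b))
      (teichmuller p a + teichmuller p b)
    rw [map_add (constantCoeff (p := p))] at h0
    simpa only [constantCoeff_apply, teichmuller_coeff_zero, sub_self] using h0
  exact ⟨_, (sub_eq_iff_eq_add'.mp (eq_iterate_verschiebung h))⟩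

variable (p A) in
/-- The ring homomorphism `A → Q_{A,n}`, `a ↦ [a ^ p]`. It is additive because `[a + b]` differs from
`[a] + [b]` by some `V z`, whose `p`-th power is divisible by `p`, and because the `p`-th power map of
`Q_{A,n}` is additive. -/
noncomputable def phiAux (n : ℕ) : A →+* WittModP p A n where
  toFun a := WittModP.mk p A n (WittVector.truncate n (teichmuller p (a ^ p)))
  map_one' := by simp
  map_zero' := by simp [(Fact.out : p.Prime).ne_zero]
  map_mul' a b := by simp [mul_pow]
  map_add' a b := by
    obtain ⟨z, hz⟩ := exists_teichmuller_add (p := p) a b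
    have hzero : WittModP.mk p A n (WittVector.truncate n (verschiebung z)) ^ p = 0 := by
      rw [← map_pow, ← map_pow, WittModP.mk_eq_zero_iff]
      obtain ⟨y, hy⟩ := natCast_dvd_verschiebung_pow z
      rw [hy, map_mul, map_natCast]
      exact dvd_mul_right _ _
    rcases subsingleton_or_nontrivial (WittModP p A n) with hs | hs
    · exact Subsingleton.elim _ _
    have : CharP (WittModP p A n) p :=
      (CharP.charP_iff_prime_eq_zero Fact.out).mpr (WittModP.natCast_eq_zero n)
    simp only [map_pow]
    rw [hz, map_add, map_add, map_add, map_add, add_pow_char, add_pow_char, hzero, add_zero]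

variable (p A) in
/-- `Φ_{A,n} : Ā → Q_{A,n}`, `a mod p ↦ [a ^ p] mod p`. -/
noncomputable def phi (n : ℕ) : A ⧸ Ideal.span {(p : A)} →+* WittModP p A n :=
  Ideal.Quotient.lift _ (phiAux p A n) (by
    intro a ha
    obtain ⟨b, rfl⟩ := Ideal.mem_span_singleton.mp ha
    rw [map_mul, map_natCast, WittModP.natCast_eq_zero, zero_mul])

noncomputable instance (n : ℕ) : Algebra (A ⧸ Ideal.span {(p : A)}) (WittModP p A n) :=
  (phi p A n).toAlgebra

theorem mk_smul_mk {n : ℕ} (a : A) (x : TruncatedWittVector p n A) :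
    (Ideal.Quotient.mk (Ideal.span {(p : A)}) a) • WittModP.mk p A n x =
      WittModP.mk p A n (WittVector.truncate n (teichmuller p (a ^ p)) * x) := by
  rw [map_mul]
  rfl

variable (p A) in
/-- The `Ā`-linear map `Q_{A,n+1} → Q_{A,n}` induced by truncation. -/
noncomputable def wittModPRestrict (n : ℕ) :
    WittModP p A (n + 1) →ₗ[A ⧸ Ideal.span {(p : A)}] WittModP p A n where
  toFun := Ideal.Quotient.lift (Ideal.span {(p : TruncatedWittVector p (n + 1) A)})
    ((WittModP.mk p A n).comp (TruncatedWittVector.truncate n.le_succ)) (by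
      intro a ha
      obtain ⟨b, rfl⟩ := Ideal.mem_span_singleton.mp ha
      rw [map_mul, map_natCast, WittModP.natCast_eq_zero, zero_mul])
  map_add' := map_add _
  map_smul' := by
    intro a x
    obtain ⟨a, rfl⟩ := Ideal.Quotient.mk_surjective a
    obtain ⟨x, rfl⟩ := WittModP.mk_surjective _ x
    rw [mk_smul_mk]
    change WittModP.mk p A n (TruncatedWittVector.truncate n.le_succ _) =
      _ • WittModP.mk p A n (TruncatedWittVector.truncate n.le_succ _)
    rw [map_mul, TruncatedWittVector.truncate_wittVector_truncate, RingHom.id_apply, mk_smul_mk]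

theorem wittModPRestrict_mk {n : ℕ} (w : WittVector p A) :
    wittModPRestrict p A n (WittModP.mk p A (n + 1) (WittVector.truncate (n + 1) w)) =
      WittModP.mk p A n (WittVector.truncate n w) := by
  change WittModP.mk p A n (TruncatedWittVector.truncate n.le_succ _) = _
  rw [TruncatedWittVector.truncate_wittVector_truncate]

theorem WittModP.exists_rep {n : ℕ} (q : WittModP p A n) :
    ∃ w : WittVector p A, WittModP.mk p A n (WittVector.truncate n w) = q := by
  obtain ⟨x, rfl⟩ := WittModP.mk_surjective _ q
  obtain ⟨w, rfl⟩ := WittVector.truncate_surjective p n A x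
  exact ⟨w, rfl⟩

theorem wittModPRestrict_surjective (n : ℕ) :
    Function.Surjective (wittModPRestrict p A n) := by
  intro q
  obtain ⟨w, rfl⟩ := q.exists_rep
  exact ⟨_, wittModPRestrict_mk w⟩

variable (p A) in
/-- The additive map `A → Q_{A,n+1}`, `x ↦ Vⁿ[x]`. -/
noncomputable def topVerschiebung (n : ℕ) : A →+ WittModP p A (n + 1) :=
  AddMonoidHom.mk' (fun x => WittModP.mk p A (n + 1)
    (WittVector.truncate (n + 1) (verschiebung^[n] (teichmuller p x)))) (by
    intro x y
    rw [← map_add, ← map_add, ← iterate_map_add]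
    congr 1
    apply truncate_iterate_verschiebung_congr
    rw [add_coeff_zero]
    simp only [teichmuller_coeff_zero])

theorem topVerschiebung_apply {n : ℕ} (x : A) : topVerschiebung p A n x =
    WittModP.mk p A (n + 1)
    (WittVector.truncate (n + 1) (verschiebung^[n] (teichmuller p x))) := rfl

theorem topVerschiebung_pow_mul {n : ℕ} (a x : A) :
    topVerschiebung p A n (a ^ p ^ (n + 1) * x) =
      Ideal.Quotient.mk (Ideal.span {(p : A)}) a • topVerschiebung p A n x := by
  rw [topVerschiebung_apply, topVerschiebung_apply, mk_smul_mk, ← map_mul, mul_comm,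
    mul_comm (teichmuller p (a ^ p)), iterate_verschiebung_mul_left]
  congr 1
  apply truncate_iterate_verschiebung_congr
  rw [mul_coeff_zero, coeff_zero_iterate_frobenius_teichmuller, teichmuller_coeff_zero,
    teichmuller_coeff_zero, ← pow_mul, pow_succ']

theorem topVerschiebung_eq_zero_iff (hp : ∀ a : A, (p : A) * a = 0 → a = 0) {n : ℕ} (x : A) :
    topVerschiebung p A n x = 0 ↔ x ∈ Ideal.span {(p : A)} := by
  rw [Ideal.mem_span_singleton]
  constructor
  · intro h
    rw [topVerschiebung_apply, WittModP.mk_eq_zero_iff] at h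
    obtain ⟨y, hy⟩ := h
    obtain ⟨y, rfl⟩ := WittVector.truncate_surjective p (n + 1) A y
    rw [← map_natCast (WittVector.truncate (p := p) (R := A) (n + 1)), ← map_mul] at hy
    have hc : ∀ i < n + 1, (verschiebung^[n] (teichmuller p x)).coeff i =
        ((p : WittVector p A) * y).coeff i := by
      intro i hi
      have := congrArg (TruncatedWittVector.coeff ⟨i, hi⟩) hy
      simpa only [coeff_truncate] using this
    have hy0 : ∀ i < n, y.coeff i = 0 := coeff_eq_zero_of_natCast_mul hp fun i hi => by
      rw [← hc i (by omega), iterate_verschiebung_coeff_eq_zero _ hi]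
    have h1 := hc n (by omega)
    rw [coeff_natCast_mul_of_coeff_eq_zero hy0] at h1
    have h2 := iterate_verschiebung_coeff (teichmuller p x) n 0
    rw [zero_add, teichmuller_coeff_zero] at h2
    exact ⟨y.coeff n, h2.symm.trans h1⟩
  · rintro ⟨y, rfl⟩
    rw [← nsmul_eq_mul, map_nsmul, nsmul_eq_mul, WittModP.natCast_eq_zero, zero_mul]

theorem topVerschiebung_mem_ker {n : ℕ} (x : A) :
    topVerschiebung p A n x ∈ LinearMap.ker (wittModPRestrict p A n) := by
  rw [LinearMap.mem_ker, topVerschiebung_apply, wittModPRestrict_mk]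
  have : WittVector.truncate n (verschiebung^[n] (teichmuller p x)) = 0 :=
    (mem_ker_truncate n _).mpr fun i hi => iterate_verschiebung_coeff_eq_zero _ hi
  rw [this, map_zero]

theorem exists_topVerschiebung_eq {n : ℕ} {q : WittModP p A (n + 1)}
    (hq : q ∈ LinearMap.ker (wittModPRestrict p A n)) : ∃ x, topVerschiebung p A n x = q := by
  obtain ⟨w, rfl⟩ := q.exists_rep
  rw [LinearMap.mem_ker, wittModPRestrict_mk, WittModP.mk_eq_zero_iff] at hq
  obtain ⟨y, hy⟩ := hq
  obtain ⟨y, rfl⟩ := WittVector.truncate_surjective p n A y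
  have h0 : ∀ i < n, (w - p * y).coeff i = 0 := by
    rw [← mem_ker_truncate, RingHom.mem_ker, map_sub, map_mul, map_natCast, hy, sub_self]
  refine ⟨(w - p * y).coeff n, ?_⟩
  have h1 : WittModP.mk p A (n + 1) (WittVector.truncate (n + 1) w) =
      WittModP.mk p A (n + 1) (WittVector.truncate (n + 1) (w - p * y)) := by
    rw [map_sub, map_sub, map_mul, map_mul, map_natCast, map_natCast, WittModP.natCast_eq_zero,
      zero_mul, sub_zero]
  rw [h1, topVerschiebung_apply, eq_iterate_verschiebung h0]
  congr 1
  apply truncate_iterate_verschiebung_congr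
  rw [teichmuller_coeff_zero]
  simpa using iterate_verschiebung_coeff ((w - p * y).shift n) n 0

variable (p A) in
/-- The map `x ↦ Vⁿ[x]`, regarded as a map from `Ā` to the kernel of `Q_{A,n+1} → Q_{A,n}`. -/
noncomputable def topVerschiebungBar (hp : ∀ a : A, (p : A) * a = 0 → a = 0) (n : ℕ) :
    A ⧸ Ideal.span {(p : A)} →+ LinearMap.ker (wittModPRestrict p A n) :=
  QuotientAddGroup.lift (Ideal.span {(p : A)}).toAddSubgroup
    ((topVerschiebung p A n).codRestrict (LinearMap.ker (wittModPRestrict p A n)).toAddSubgroup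
      topVerschiebung_mem_ker)
    (fun x hx => Subtype.ext ((topVerschiebung_eq_zero_iff hp x).mpr hx))

variable (p A) in
/-- For `p`-torsion free `A`, the kernel of `Q_{A,n+1} → Q_{A,n}` is identified with `Ā` as a group.
-/
noncomputable def topVerschiebungEquiv (hp : ∀ a : A, (p : A) * a = 0 → a = 0) (n : ℕ) :
    A ⧸ Ideal.span {(p : A)} ≃+ LinearMap.ker (wittModPRestrict p A n) :=
  AddEquiv.ofBijective (topVerschiebungBar p A hp n) (by
    constructor
    · rw [injective_iff_map_eq_zero]
      intro x hx
      obtain ⟨x, rfl⟩ := Ideal.Quotient.mk_surjective x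
      exact Ideal.Quotient.eq_zero_iff_mem.mpr
        ((topVerschiebung_eq_zero_iff hp x).mp (congrArg Subtype.val hx))
    · rintro ⟨q, hq⟩
      obtain ⟨x, rfl⟩ := exists_topVerschiebung_eq hq
      exact ⟨Ideal.Quotient.mk _ x, rfl⟩)

/-- As an `Ā`-module, the kernel of `Q_{A,n+1} → Q_{A,n}` is `F^{n+1}_* Ā`. -/
theorem topVerschiebungEquiv_pow_mul (hp : ∀ a : A, (p : A) * a = 0 → a = 0) (n : ℕ)
    (a x : A ⧸ Ideal.span {(p : A)}) :
    topVerschiebungEquiv p A hp n (a ^ p ^ (n + 1) * x) = a • topVerschiebungEquiv p A hp n x := by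
  obtain ⟨a, rfl⟩ := Ideal.Quotient.mk_surjective a
  obtain ⟨x, rfl⟩ := Ideal.Quotient.mk_surjective x
  exact Subtype.ext (topVerschiebung_pow_mul a x)

end Witt

/-! ### Projectivity of `W_n(A)/p` -/

section Projective

open RingTheory.Sequence IsLocalRing


/-- If the group `K` is identified with `C` so that `a : B` acts on `K` as multiplication by `g a` on
`C`, for a finite ring homomorphism `g`, then `K` is a finite `B`-module. -/
theorem finite_of_addEquiv {B : Type u} {C : Type v} {K : Type w} [CommRing B] [CommRing C]
    [AddCommGroup K] [Module B K] (g : B →+* C) (hg : g.Finite) (e : C ≃+ K)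
    (he : ∀ a x, e (g a * x) = a • e x) : Module.Finite B K := by
  let := g.toAlgebra
  have : Module.Finite B C := hg
  let e' : C →ₗ[B] K :=
    { toFun := e
      map_add' := map_add e
      map_smul' := fun a x => by rw [Algebra.smul_def]; exact he a x }
  exact Module.Finite.of_surjective e' e.surjective

theorem exists_lift_of_projective {B : Type u} {C : Type v} {Q : Type w} [CommRing B] [CommRing C]
    [AddCommGroup Q] [Module B Q] [Module.Projective B Q] (θ : B →+* C)
    (hθ : Function.Surjective θ) (τ : Q →+ C) (hτ : ∀ a q, τ (a • q) = θ a * τ q) :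
    ∃ ψ : Q →ₗ[B] B, ∀ q, θ (ψ q) = τ q := by
  let := θ.toAlgebra
  let τ' : Q →ₗ[B] C :=
    { toFun := τ
      map_add' := map_add τ
      map_smul' := fun a x => by rw [Algebra.smul_def]; exact hτ a x }
  obtain ⟨ψ, hψ⟩ := Module.projective_lifting_property (Algebra.linearMap B C) τ' hθ
  exact ⟨ψ, fun q => LinearMap.congr_fun hψ q⟩

theorem projective_of_ker {B : Type u} {M : Type v} {N : Type w} [CommRing B]
    [AddCommGroup M] [Module B M] [AddCommGroup N] [Module B N] (g : M →ₗ[B] N)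
    (hg : Function.Surjective g) [Module.Projective B N] [Module.Projective B (LinearMap.ker g)] :
    Module.Projective B M := by
  obtain ⟨s, hs⟩ := Module.projective_lifting_property g LinearMap.id hg
  have hs' : ∀ x, g (s x) = x := fun x => LinearMap.congr_fun hs x
  let i : M →ₗ[B] LinearMap.ker g × N :=
    ((LinearMap.id - s.comp g).codRestrict (LinearMap.ker g) (by simp [hs'])).prod g
  let r : LinearMap.ker g × N →ₗ[B] M := (LinearMap.ker g).subtype.coprod s
  exact Module.Projective.of_split i r (by ext m; simp [i, r])

theorem iterateFrobenius_finite {B : Type u} [CommRing B] (p : ℕ) [Fact p.Prime] [CharP B p]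
    (h : (frobenius B p).Finite) (n : ℕ) : (iterateFrobenius B p n).Finite := by
  induction n with
  | zero => rw [iterateFrobenius_zero]; exact RingHom.Finite.id B
  | succ n ih =>
    rw [iterateFrobenius_add, iterateFrobenius_one]
    exact ih.comp h

/-- `Q_{A,n}` is a projective `Ā`-module when `A` is regular local with a finite lift of Frobenius and
`p ∈ m \ m²`: the kernels of its restriction maps are the free modules `F^{k}_* Ā`. -/
theorem projective_wittModP {p : ℕ} [Fact p.Prime] {A : Type u} [CommRing A] [IsNoetherianRing A]
    [IsLocalRing A]
    (hregA : ∃ rs : List A, IsRegular A rs ∧ Ideal.ofList rs = maximalIdeal A)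
    (φ : A →+* A) (hφ : ∀ a : A, (p : A) ∣ (φ a - a ^ p)) (hφfin : φ.Finite)
    (hpm : (p : A) ∈ maximalIdeal A) (hpm2 : (p : A) ∉ (maximalIdeal A) ^ 2) (n : ℕ) :
    Module.Projective (A ⧸ Ideal.span {(p : A)}) (WittModP p A n) := by
  obtain ⟨rs, hrs, hm⟩ := hregA
  obtain ⟨l, hl, hlm⟩ := exists_cons_isWeaklyRegular hrs.toIsWeaklyRegular hm hpm hpm2
  rw [isWeaklyRegular_cons_iff] at hl
  obtain ⟨hpreg, hl⟩ := hl
  have hp : ∀ a : A, (p : A) * a = 0 → a = 0 := fun a ha =>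
    hpreg.right_eq_zero_of_smul ha
  set B := A ⧸ Ideal.span {(p : A)} with hB
  have hle : Ideal.span {(p : A)} ≤ maximalIdeal A := by simpa using hpm
  have : Nontrivial B :=
    Ideal.Quotient.nontrivial_iff.mpr (ne_top_of_le_ne_top (maximalIdeal.isMaximal A).ne_top hle)
  have : IsLocalRing B := .of_surjective' (Ideal.Quotient.mk _) Ideal.Quotient.mk_surjective
  have : CharP B p := (CharP.charP_iff_prime_eq_zero Fact.out).mpr (by
    rw [← map_natCast (Ideal.Quotient.mk (Ideal.span {(p : A)})), Ideal.Quotient.eq_zero_iff_mem]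
    exact Ideal.mem_span_singleton_self _)
  have hlB : IsWeaklyRegular B (l.map (algebraMap A B)) := by
    rw [isWeaklyRegular_map_algebraMap_iff]
    refine ((Submodule.quotEquivOfEq _ _ ?_).isWeaklyRegular_congr l).mp hl
    rw [← Submodule.ideal_span_singleton_smul, smul_eq_mul, Ideal.mul_top]
  have hmB : Ideal.ofList (l.map (algebraMap A B)) = maximalIdeal B := by
    have : (maximalIdeal A).map (Ideal.Quotient.mk (Ideal.span {(p : A)})) = maximalIdeal B :=
      map_maximalIdeal_of_surjective _ Ideal.Quotient.mk_surjective
    rw [← this, ← hlm, Ideal.ofList_cons, Ideal.map_sup, Ideal.map_quotient_self, bot_sup_eq,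
      Ideal.map_ofList]
    rfl
  have hfrob : (frobenius B p).Finite := by
    have h₁ : (frobenius B p).comp (Ideal.Quotient.mk (Ideal.span {(p : A)})) =
        (Ideal.Quotient.mk (Ideal.span {(p : A)})).comp φ := by
      ext a
      rw [RingHom.comp_apply, RingHom.comp_apply, frobenius_def, ← map_pow, eq_comm,
        Ideal.Quotient.mk_eq_mk_iff_sub_mem, Ideal.mem_span_singleton]
      exact hφ a
    refine RingHom.Finite.of_comp_finite (f := Ideal.Quotient.mk (Ideal.span {(p : A)})) ?_
    rw [h₁]
    exact (RingHom.Finite.of_surjective _ Ideal.Quotient.mk_surjective).comp hφfin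
  induction n with
  | zero =>
    have : Subsingleton (WittModP p A 0) := by
      have : Subsingleton (TruncatedWittVector p 0 A) :=
        ⟨fun x y => TruncatedWittVector.ext fun i => i.elim0⟩
      exact (WittModP.mk_surjective (p := p) (A := A) 0).subsingleton
    infer_instance
  | succ n ih =>
    let e := topVerschiebungEquiv p A hp n
    have he : ∀ a x : B, e (a ^ p ^ (n + 1) * x) = a • e x := topVerschiebungEquiv_pow_mul hp n
    have : Module.Finite B (LinearMap.ker (wittModPRestrict p A n)) :=
      finite_of_addEquiv (iterateFrobenius B p (n + 1)) (iterateFrobenius_finite p hfrob _) e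
        (fun a x => by rw [iterateFrobenius_def]; exact he a x)
    have hpow : IsWeaklyRegular B ((l.map (algebraMap A B)).map (· ^ p ^ (n + 1))) := by
      obtain ⟨k, hk⟩ := Nat.exists_eq_succ_of_ne_zero
        (pow_ne_zero (n + 1) (Fact.out : p.Prime).ne_zero)
      rw [hk]
      exact isWeaklyRegular_map_pow k _ (fun x hx => hmB ▸ Ideal.subset_span hx) B hlB
    have hK : IsWeaklyRegular (LinearMap.ker (wittModPRestrict p A n))
        (l.map (algebraMap A B)) := by
      refine (AddEquiv.isWeaklyRegular_congr (e := e) ?_).mp hpow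
      rw [List.forall₂_map_left_iff, List.forall₂_same]
      exact fun a _ x => he a x
    have : Module.Free B (LinearMap.ker (wittModPRestrict p A n)) :=
      free_of_isWeaklyRegular_generators _ B _ _ rfl hmB hK
    exact projective_of_ker _ (wittModPRestrict_surjective n)

end Projective

/-! ### Passage from `A` to a quotient -/

section Quotient

/-- The ring homomorphism `W_n(A) → W_n(R)` induced by `π : A → R`. -/
noncomputable def truncatedMap {p : ℕ} [Fact p.Prime] {A : Type u} {R : Type v} [CommRing A]
    [CommRing R] (π : A →+* R) (n : ℕ) : TruncatedWittVector p n A →+* TruncatedWittVector p n R :=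
  (WittVector.truncate n).liftOfRightInverse TruncatedWittVector.out
    TruncatedWittVector.truncateFun_out ⟨(WittVector.truncate n).comp (WittVector.map π), by
      intro w hw
      rw [WittVector.mem_ker_truncate] at hw
      rw [RingHom.mem_ker, RingHom.comp_apply, ← RingHom.mem_ker, WittVector.mem_ker_truncate]
      intro i hi
      rw [WittVector.map_coeff, hw i hi, map_zero]⟩

theorem truncatedMap_truncate {p : ℕ} [Fact p.Prime] {A : Type u} {R : Type v} [CommRing A]
    [CommRing R] (π : A →+* R) (n : ℕ) (w : WittVector p A) :
    truncatedMap π n (WittVector.truncate n w) = WittVector.truncate n (WittVector.map π w) :=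
  RingHom.liftOfRightInverse_comp_apply _ _ _ _ _

theorem truncatedMap_teichmuller {p : ℕ} [Fact p.Prime] {A : Type u} {R : Type v} [CommRing A]
    [CommRing R] (π : A →+* R) (n : ℕ) (a : A) :
    truncatedMap π n (WittVector.truncate n (WittVector.teichmuller p (a ^ p))) =
      WittVector.truncate n (WittVector.teichmuller p (π a ^ p)) := by
  rw [truncatedMap_truncate, WittVector.map_teichmuller, map_pow]

theorem truncatedMap_surjective {p : ℕ} [Fact p.Prime] {A : Type u} {R : Type v} [CommRing A]
    [CommRing R] (π : A →+* R) (hπ : Function.Surjective π) (n : ℕ) :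
    Function.Surjective (truncatedMap (p := p) π n) := by
  intro y
  obtain ⟨y, rfl⟩ := WittVector.truncate_surjective p n R y
  obtain ⟨w, rfl⟩ := WittVector.map_surjective π hπ y
  exact ⟨_, truncatedMap_truncate π n w⟩

theorem natCast_quotient_eq_zero (S : Type u) [CommRing S] (p : ℕ) :
    ((p : ℕ) : S ⧸ Ideal.span {(p : S)}) = 0 := by
  rw [← map_natCast (Ideal.Quotient.mk (Ideal.span {(p : S)})), Ideal.Quotient.eq_zero_iff_mem]
  exact Ideal.mem_span_singleton_self _

/-- The surjection `Ā → R̄` for `R = A/J`; its kernel is `J Ā` by `ker_reduction`. -/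
def reduction {A : Type u} [CommRing A] (p : ℕ) (J : Ideal A) :
    A ⧸ Ideal.span {(p : A)} →+* (A ⧸ J) ⧸ Ideal.span {(p : A ⧸ J)} :=
  Ideal.Quotient.lift _ ((Ideal.Quotient.mk _).comp (Ideal.Quotient.mk J)) (by
    intro a ha
    obtain ⟨b, rfl⟩ := Ideal.mem_span_singleton.mp ha
    rw [map_mul, map_natCast, natCast_quotient_eq_zero, zero_mul])

theorem reduction_surjective {A : Type u} [CommRing A] (p : ℕ) (J : Ideal A) :
    Function.Surjective (reduction p J) := by
  intro y
  obtain ⟨y, rfl⟩ := Ideal.Quotient.mk_surjective y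
  obtain ⟨a, rfl⟩ := Ideal.Quotient.mk_surjective y
  exact ⟨Ideal.Quotient.mk _ a, rfl⟩

theorem ker_reduction {A : Type u} [CommRing A] (p : ℕ) (J : Ideal A) :
    RingHom.ker (reduction p J) = J.map (Ideal.Quotient.mk (Ideal.span {(p : A)})) := by
  refine le_antisymm ?_ ?_
  · intro x hx
    obtain ⟨a, rfl⟩ := Ideal.Quotient.mk_surjective x
    have h : Ideal.Quotient.mk (Ideal.span {(p : A ⧸ J)}) (Ideal.Quotient.mk J a) = 0 := hx
    rw [Ideal.Quotient.eq_zero_iff_mem, Ideal.mem_span_singleton] at h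
    obtain ⟨c, hc⟩ := h
    obtain ⟨c, rfl⟩ := Ideal.Quotient.mk_surjective c
    have hJ : a - p * c ∈ J := by
      rw [← Ideal.Quotient.eq_zero_iff_mem, map_sub, map_mul, map_natCast, hc, sub_self]
    have h₁ := Ideal.mem_map_of_mem (Ideal.Quotient.mk (Ideal.span {(p : A)})) hJ
    rwa [map_sub, map_mul, map_natCast, natCast_quotient_eq_zero, zero_mul, sub_zero] at h₁
  · rw [Ideal.map_le_iff_le_comap]
    intro a ha
    change Ideal.Quotient.mk _ (Ideal.Quotient.mk J a) = 0
    rw [Ideal.Quotient.eq_zero_iff_mem.mpr ha, map_zero]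

end Quotient

/-- Let `(A, m)` be a regular local ring with a finite lift of
Frobenius `φ`, `p ∈ m \ m²`, `Ā := A/pA`.  Let `f₁, …, f_r` be a regular sequence in
`A`, `I := (f₁,…,f_r)Ā`, `R := A/(f₁,…,f_r)` with `p` a nonzerodivisor on `R`.  Then
for every `n ≥ 1`: `R` is `n`-quasi-`F`-split iff there is an `Ā`-module homomorphism
`ψ : Q_{A,n} → Ā` (formulated below as an additive, `Φ_{A,n}`-semilinear map
`W_n(A) → Ā`, which automatically descends mod `p`) such that `ψ(1)` is a unit and
`ψ(Ker(Q_{A,n} → Q_{R,n})) ⊆ I`, the map `Q_{A,n} → Q_{R,n}` being induced by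
functoriality of Witt vectors from `A → R`. -/
theorem quasiFSplit_iff_exists_lift_splitting (p : ℕ) [Fact p.Prime]
    (A : Type*) [CommRing A] [IsNoetherianRing A] [IsLocalRing A]
    -- `A` is a regular local ring: its maximal ideal is generated by a regular sequence
    (hregA : ∃ rs : List A, RingTheory.Sequence.IsRegular A rs ∧
      Ideal.ofList rs = IsLocalRing.maximalIdeal A)
    -- `φ` is a finite lift of Frobenius on `A`
    (φ : A →+* A) (hφ : ∀ a : A, (p : A) ∣ (φ a - a ^ p)) (hφfin : φ.Finite)
    -- `p ∈ m \ m²`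
    (hpm : (p : A) ∈ IsLocalRing.maximalIdeal A)
    (hpm2 : (p : A) ∉ (IsLocalRing.maximalIdeal A) ^ 2)
    -- the regular sequence `f₁, …, f_r`
    (r : ℕ) (f : Fin r → A)
    (hfreg : RingTheory.Sequence.IsRegular A (List.ofFn f))
    -- `p` is a nonzerodivisor on `R = A/(f₁,…,f_r)`
    (hpR : (p : A ⧸ Ideal.span (Set.range f)) ∈
      nonZeroDivisors (A ⧸ Ideal.span (Set.range f)))
    (n : ℕ) (hn : 1 ≤ n) :
    IsNQuasiFSplit p (A ⧸ Ideal.span (Set.range f)) n ↔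
      ∃ ψ : TruncatedWittVector p n A → A ⧸ Ideal.span {(p : A)},
        -- `ψ` is additive (hence descends to `Q_{A,n} = W_n(A)/pW_n(A)`)
        (∀ x y : TruncatedWittVector p n A, ψ (x + y) = ψ x + ψ y) ∧
        -- `ψ` is `Ā`-linear for the module structure via `Φ_{A,n}`
        (∀ (a : A) (x : TruncatedWittVector p n A),
          ψ (WittVector.truncate n (WittVector.teichmuller p (a ^ p)) * x)
            = Ideal.Quotient.mk _ a * ψ x) ∧
        -- `ψ(1)` is a unit of `Ā`
        IsUnit (ψ 1) ∧
        -- `ψ` maps the kernel of `Q_{A,n} → Q_{R,n}` into `I`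
        (∀ w : WittVector p A,
          (p : TruncatedWittVector p n (A ⧸ Ideal.span (Set.range f))) ∣
            WittVector.truncate n
              (WittVector.map (Ideal.Quotient.mk (Ideal.span (Set.range f))) w) →
          ψ (WittVector.truncate n w) ∈
            Ideal.span (Set.range fun i =>
              Ideal.Quotient.mk (Ideal.span {(p : A)}) (f i))) := by
  set J := Ideal.span (Set.range f) with hJ
  have hI : Ideal.span (Set.range fun i => Ideal.Quotient.mk (Ideal.span {(p : A)}) (f i)) =
      RingHom.ker (reduction p J) := by
    rw [ker_reduction, hJ, Ideal.map_span, ← Set.range_comp]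
    rfl
  rw [hI]
  have hθ : ∀ a : A, reduction p J (Ideal.Quotient.mk _ a) =
      Ideal.Quotient.mk _ (Ideal.Quotient.mk J a) := fun _ => rfl
  let μ := truncatedMap (p := p) (Ideal.Quotient.mk J) n
  constructor
  · rintro ⟨σ, hadd, hsmul, hone⟩
    let σ' : TruncatedWittVector p n (A ⧸ J) →+ (A ⧸ J) ⧸ Ideal.span {(p : A ⧸ J)} :=
      AddMonoidHom.mk' σ hadd
    have hσp : ∀ x, σ' (p * x) = 0 := fun x => by
      rw [← nsmul_eq_mul, map_nsmul, nsmul_eq_mul, natCast_quotient_eq_zero, zero_mul]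
    -- `τ : Q_{A,n} → R̄` is the composite of `Q_{A,n} → Q_{R,n}` with the splitting.
    let τ₀ : TruncatedWittVector p n A →+ (A ⧸ J) ⧸ Ideal.span {(p : A ⧸ J)} :=
      σ'.comp μ.toAddMonoidHom
    let τ : WittModP p A n →+ (A ⧸ J) ⧸ Ideal.span {(p : A ⧸ J)} :=
      QuotientAddGroup.lift (Ideal.span {(p : TruncatedWittVector p n A)}).toAddSubgroup τ₀ (by
        intro x hx
        obtain ⟨y, rfl⟩ := Ideal.mem_span_singleton.mp hx
        change σ' (μ (p * y)) = 0
        rw [map_mul, map_natCast, hσp])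
    have hτ : ∀ x, τ (WittModP.mk p A n x) = σ (μ x) := fun _ => rfl
    have := projective_wittModP hregA φ hφ hφfin hpm hpm2 n
    obtain ⟨ψ, hψ⟩ := exists_lift_of_projective (reduction p J) (reduction_surjective p J) τ (by
      intro a q
      obtain ⟨a, rfl⟩ := Ideal.Quotient.mk_surjective a
      obtain ⟨x, rfl⟩ := WittModP.mk_surjective _ q
      rw [mk_smul_mk, hτ, hτ, hθ, map_mul, truncatedMap_teichmuller, hsmul])
    refine ⟨fun x => ψ (WittModP.mk p A n x), fun x y => by simp only [map_add],
      fun a x => by simp only [← mk_smul_mk, map_smul, smul_eq_mul], ?_, ?_⟩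
    · have h1 : reduction p J (ψ (WittModP.mk p A n 1)) = 1 := by
        have := hone 1
        rw [one_pow, map_one, map_one, map_one] at this
        rw [hψ, hτ, map_one, this]
      have hJm : J ≤ IsLocalRing.maximalIdeal A := by
        refine IsLocalRing.le_maximalIdeal fun hJtop => hfreg.top_ne_smul ?_
        have hofList : Ideal.ofList (List.ofFn f) = J := by
          rw [hJ, Ideal.ofList]
          congr 1
          ext a
          simp [List.mem_ofFn]
        rw [hofList, hJtop, Submodule.top_smul]
      have : Nontrivial ((A ⧸ J) ⧸ Ideal.span {(p : A ⧸ J)}) := by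
        refine (Ideal.Quotient.lift (Ideal.span {(p : A ⧸ J)})
          (Ideal.Quotient.factor hJm) ?_).domain_nontrivial
        intro a ha
        obtain ⟨b, rfl⟩ := Ideal.mem_span_singleton.mp ha
        have hp0 : (p : A ⧸ IsLocalRing.maximalIdeal A) = 0 := by
          rw [← map_natCast (Ideal.Quotient.mk _), Ideal.Quotient.eq_zero_iff_mem]
          exact hpm
        rw [map_mul, map_natCast, hp0, zero_mul]
      have := Ideal.Quotient.nontrivial_iff.mpr (ne_top_of_le_ne_top
        (IsLocalRing.maximalIdeal.isMaximal A).ne_top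
        ((Ideal.span_singleton_le_iff_mem _).mpr hpm))
      have : IsLocalRing (A ⧸ Ideal.span {(p : A)}) :=
        .of_surjective' (Ideal.Quotient.mk _) Ideal.Quotient.mk_surjective
      have := (reduction_surjective p J).isLocalHom
      exact isUnit_of_map_unit (reduction p J) _ (h1 ▸ isUnit_one)
    · rintro w ⟨y, hy⟩
      rw [RingHom.mem_ker, hψ, hτ, truncatedMap_truncate, hy]
      exact hσp y
  · rintro ⟨ψ, hadd, hsmul, ⟨u, hu⟩, hker⟩
    let ψ' : TruncatedWittVector p n A →+ A ⧸ Ideal.span {(p : A)} := AddMonoidHom.mk' ψ hadd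
    choose s hs using truncatedMap_surjective (p := p) (Ideal.Quotient.mk J)
      Ideal.Quotient.mk_surjective n
    let σ : TruncatedWittVector p n (A ⧸ J) → (A ⧸ J) ⧸ Ideal.span {(p : A ⧸ J)} :=
      fun y => reduction p J (↑u⁻¹ * ψ (s y))
    -- The value of `σ` does not depend on the chosen preimage, since `ψ` maps `ker μ` into `I`.
    have hσ : ∀ x, σ (μ x) = reduction p J (↑u⁻¹ * ψ x) := by
      intro x
      have hx : μ (s (μ x) - x) = 0 := by rw [map_sub, sub_eq_zero]; exact hs _
      obtain ⟨w, hw⟩ := WittVector.truncate_surjective p n A (s (μ x) - x)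
      have h0 := hker w (by
        rw [← truncatedMap_truncate, hw]
        exact hx ▸ dvd_zero _)
      have hsub : ψ (s (μ x) - x) = ψ (s (μ x)) - ψ x := map_sub ψ' _ _
      rw [hw, hsub, RingHom.mem_ker, map_sub, sub_eq_zero] at h0
      simp only [σ]
      rw [map_mul, map_mul, h0]
    have hμ : Function.Surjective μ := fun y => ⟨s y, hs y⟩
    have hlin : ∀ (a : A ⧸ J) (x : TruncatedWittVector p n (A ⧸ J)),
        σ (WittVector.truncate n (WittVector.teichmuller p (a ^ p)) * x) =
          Ideal.Quotient.mk _ a * σ x := by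
      intro a x
      obtain ⟨a, rfl⟩ := Ideal.Quotient.mk_surjective a
      obtain ⟨x, rfl⟩ := hμ x
      rw [← truncatedMap_teichmuller, ← map_mul, hσ, hσ, hsmul, ← hθ, ← map_mul,
        mul_left_comm]
    refine ⟨σ, ?_, hlin, ?_⟩
    · intro x y
      obtain ⟨x, rfl⟩ := hμ x
      obtain ⟨y, rfl⟩ := hμ y
      rw [← map_add, hσ, hσ, hσ, hadd, mul_add, map_add]
    · intro a
      have h := hlin a (μ 1)
      rwa [hσ, ← hu, Units.inv_mul, map_one, mul_one, map_one, mul_one] at h
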